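/- Let S be a dense subsemigroup of (ℍ, +). A subset D of S is an IP* set near 0 (i.e., for every IP set near 0 C ⊆ S, the intersection C ∩ D is an IP set near 0) if and only if D belongs to every idempotent ultrafilter of 0⁺(S). -/

import Mathlib

open Filter Topology

/-- Finite sums of distinct terms of a sequence of quaternions. -/
def FS (x : ℕ → Quaternion ℝ) : Set (Quaternion ℝ) :=
  {a | ∃ H : Finset ℕ, H.Nonempty ∧ a = ∑ t ∈ H, x t}

/-- The series `∑ₙ xₙ` converges (its partial sums converge). -/
def SeriesConverges (x : ℕ → Quaternion ℝ) : Prop :=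
  ∃ L : Quaternion ℝ, Tendsto (fun N => ∑ n ∈ Finset.range N, x n) atTop (𝓝 L)

/-- `A` is an IP set near 0 in `S`. -/
def IPNearZero (S A : Set (Quaternion ℝ)) : Prop :=
  ∃ x : ℕ → Quaternion ℝ, (∀ n, x n ∈ S) ∧ SeriesConverges x ∧ FS x ⊆ A

/-- `D` is an IP* set near 0 in `S`: it meets every IP set near 0 in an IP set near 0. -/
def IPStarNearZero (S D : Set (Quaternion ℝ)) : Prop :=
  ∀ C ⊆ S, IPNearZero S C → IPNearZero S (C ∩ D)

/-- The semigroup operation `+` on the ultrafilters `βS_d` on `S`: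
`A ∈ p + q` iff `{x ∈ S : {y ∈ S : x + y ∈ A} ∈ q} ∈ p`. -/
noncomputable def uaddS (S : Set (Quaternion ℝ)) (hS : ∀ a ∈ S, ∀ b ∈ S, a + b ∈ S)
    (p q : Ultrafilter S) : Ultrafilter S :=
  p.bind fun x => q.map fun y => (⟨x.1 + y.1, hS x.1 x.2 y.1 y.2⟩ : S)

/-- `0⁺(S)`: the ultrafilters `p` on `S` with `{s ∈ S : ‖s‖ < r} ∈ p` for every `r > 0`. -/
def zeroPlus (S : Set (Quaternion ℝ)) : Set (Ultrafilter S) :=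
  {p | ∀ r : ℝ, 0 < r → {s : S | ‖(s : Quaternion ℝ)‖ < r} ∈ p}

/-!
The theorem reduces to the fact that a set is IP near `0` if and only if it belongs to some
idempotent ultrafilter converging to `0`; the statement about IP* sets follows by complementation.

Fix a basis `V 0 ⊇ V 1 ⊇ ⋯` of neighbourhoods of `0` with `V (n + 1) + V (n + 1) ⊆ V n`. If
`x n ∈ V (n + 1)` for all `n`, then every finite sum of terms of index at least `n` lies in `V n`.

* If `∑ x n` converges, then `x n → 0`, so a subsequence satisfies `x n ∈ V (n + 1)`. An idempotent
  ultrafilter containing the finite sums of every tail of that subsequence converges to `0`.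
* Conversely, from an idempotent `p → 0` containing `A` the usual construction in Hindman's theorem
  extracts `x` with all its finite sums in `A`; since each `V (n + 1)` is in `p` one may also ask
  for `x n ∈ V (n + 1)`, and then the series is Cauchy.
-/

attribute [local instance] Ultrafilter.add Ultrafilter.addSemigroup

section FiniteSums

open scoped Pointwise

variable {M : Type*}

theorem antitone_hindmanFS_drop [AddSemigroup M] (a : Stream' M) :
    Antitone fun n => Hindman.FS (a.drop n) := by
  refine antitone_nat_of_succ_le fun n m hm => ?_
  rw [← Stream'.drop_drop, ← Stream'.tail_eq_drop] at hm
  exact Hindman.FS.tail _ m hm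

theorem hindmanFS_drop_subset [AddSemigroup M] {a : Stream' M} {s : ℕ → Set M} (hs : Antitone s)
    (ha : ∀ n, a.get n ∈ s n) (hadd : ∀ n, ∀ m ∈ s (n + 1), a.get n + m ∈ s n) (n : ℕ) :
    Hindman.FS (a.drop n) ⊆ s n := by
  intro m hm
  generalize hb : a.drop n = b at hm
  have tail_eq (n : ℕ) : (a.drop n).tail = a.drop (n + 1) := by
    rw [Stream'.tail_eq_drop, Stream'.drop_drop]
  induction hm generalizing n with
  | head' b => subst hb; rw [Stream'.head_drop]; exact ha n
  | tail' b m _ ih => subst hb; exact hs n.le_succ (ih (n + 1) (tail_eq n).symm)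
  | cons' b m _ ih =>
    subst hb
    rw [Stream'.head_drop]
    exact hadd n m (ih (n + 1) (tail_eq n).symm)

theorem hindmanFS_drop_subset_of_add_subset [AddSemigroup M] {x : Stream' M} {V : ℕ → Set M}
    (hV : Antitone V) (hadd : ∀ n, V (n + 1) + V (n + 1) ⊆ V n) (hx : ∀ n, x.get n ∈ V (n + 1))
    (n : ℕ) : Hindman.FS (x.drop n) ⊆ V n :=
  hindmanFS_drop_subset hV (fun n => hV n.le_succ (hx n))
    (fun n _ hm => hadd n (Set.add_mem_add (hx n) hm)) n

theorem hindmanFS_map {N : Type*} [AddSemigroup M] [AddSemigroup N] (f : M →ₙ+ N)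
    (a : Stream' M) : Hindman.FS (a.map f) = f '' Hindman.FS a := by
  apply Set.Subset.antisymm
  · intro m hm
    generalize hb : a.map f = b at hm
    induction hm generalizing a with
    | head' b => subst hb; exact ⟨_, Hindman.FS.head a, rfl⟩
    | tail' b m _ ih =>
      subst hb
      obtain ⟨m, hm, rfl⟩ := ih a.tail rfl
      exact ⟨m, Hindman.FS.tail a m hm, rfl⟩
    | cons' b m _ ih =>
      subst hb
      obtain ⟨m, hm, rfl⟩ := ih a.tail rfl
      exact ⟨_, Hindman.FS.cons a m hm, map_add f _ _⟩
  · rintro _ ⟨m, hm, rfl⟩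
    induction hm with
    | head' a => exact Hindman.FS.head (a.map f)
    | tail' a m _ ih => exact Hindman.FS.tail (a.map f) _ ih
    | cons' a m _ ih => rw [map_add]; exact Hindman.FS.cons (a.map f) _ ih

theorem mem_hindmanFS_iff_exists_sum [AddCommMonoid M] {a : Stream' M} {m : M} :
    m ∈ Hindman.FS a ↔ ∃ H : Finset ℕ, H.Nonempty ∧ m = ∑ i ∈ H, a.get i := by
  refine ⟨fun hm => ?_, ?_⟩
  · induction hm with
    | head' a => exact ⟨{0}, by simp, by simp⟩
    | tail' a m _ ih =>
      obtain ⟨H, hH, rfl⟩ := ih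
      exact ⟨H.map ⟨Nat.succ, Nat.succ_injective⟩, by simpa using hH, by simp⟩
    | cons' a m _ ih =>
      obtain ⟨H, -, rfl⟩ := ih
      exact ⟨insert 0 (H.map ⟨Nat.succ, Nat.succ_injective⟩), by simp, by simp⟩
  · rintro ⟨H, hH, rfl⟩
    exact Hindman.FS.finsetSum a H hH

theorem hindmanFS_subsequence_subset [AddCommMonoid M] (a : Stream' M) {φ : ℕ → ℕ}
    (hφ : φ.Injective) : Hindman.FS (fun n => a.get (φ n)) ⊆ Hindman.FS a := by
  intro m hm
  obtain ⟨H, hH, rfl⟩ := mem_hindmanFS_iff_exists_sum.1 hm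
  exact mem_hindmanFS_iff_exists_sum.2 ⟨H.map ⟨φ, hφ⟩, by simpa using hH,
    (Finset.sum_map H ⟨φ, hφ⟩ a.get).symm⟩

end FiniteSums

section IdempotentUltrafilters

variable {M : Type*} [AddSemigroup M]

-- The ultrafilters finer than `F` form a compact subsemigroup, so Ellis' lemma applies to it.
theorem exists_idempotent_ultrafilter_le (F : Filter M) [F.NeBot]
    (hF : ∀ s ∈ F, ∀ᶠ m in F, ∀ᶠ m' in F, m + m' ∈ s) :
    ∃ U : Ultrafilter M, U + U = U ∧ ↑U ≤ F := by
  have hclosed : IsClosed {U : Ultrafilter M | ↑U ≤ F} := by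
    simp only [Filter.le_def, Set.ofPred_forall]
    exact isClosed_biInter fun s _ => ultrafilter_isClosed_basic s
  obtain ⟨U, hU, hidem⟩ := exists_idempotent_in_compact_add_subsemigroup
    Ultrafilter.continuous_add_left {U : Ultrafilter M | ↑U ≤ F}
    ⟨Ultrafilter.of F, Ultrafilter.of_le F⟩ hclosed.isCompact
    fun U hU V hV s hs => hU ((hF s hs).mono fun _ hm => hV hm)
  exact ⟨U, hidem, hU⟩

theorem exists_idempotent_ultrafilter_forall_hindmanFS_drop_mem (a : Stream' M) :
    ∃ U : Ultrafilter M, U + U = U ∧ ∀ n, Hindman.FS (a.drop n) ∈ U := by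
  have hbasis := HasAntitoneBasis.iInf_principal (antitone_hindmanFS_drop a)
  have : (⨅ n, 𝓟 (Hindman.FS (a.drop n))).NeBot :=
    hbasis.neBot_iff.2 fun _ => ⟨_, Hindman.FS.head _⟩
  obtain ⟨U, hU, hle⟩ := exists_idempotent_ultrafilter_le _ fun s hs => by
    obtain ⟨n, hn⟩ := hbasis.mem_iff.1 hs
    filter_upwards [hbasis.mem n] with m hm
    obtain ⟨k, hk⟩ := Hindman.FS.add hm
    filter_upwards [hbasis.mem (n + k)] with m' hm'
    rw [← Stream'.drop_drop] at hm'
    exact hn (hk m' hm')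
  exact ⟨U, hU, fun n => hle (hbasis.mem n)⟩

/- Refines `Hindman.exists_FS_of_large` by prescribing a set `t n ∈ U` for each term. The state
`r n` of the recursion is a member of `U` that contains all finite sums from index `n` on. -/
theorem exists_stream_mem_hindmanFS_subset {U : Ultrafilter M} (hU : U + U = U) {s : Set M}
    (hs : s ∈ U) {t : ℕ → Set M} (ht : ∀ n, t n ∈ U) :
    ∃ a : Stream' M, (∀ n, a.get n ∈ t n) ∧ Hindman.FS a ⊆ s := by
  have step (n : ℕ) (r : {r // r ∈ U}) :
      ∃ m ∈ t n, m ∈ r.1 ∧ ∃ r' : {r // r ∈ U}, r'.1 ⊆ r.1 ∧ ∀ m' ∈ r'.1, m + m' ∈ r.1 := by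
    have hr : ∀ᶠ m in U, ∀ᶠ m' in U, m + m' ∈ r.1 := by
      rw [← Ultrafilter.eventually_add, hU]
      exact r.2
    obtain ⟨m, hmt, hmr, hm⟩ := (Eventually.and (ht n) (Eventually.and r.2 hr)).exists
    exact ⟨m, hmt, hmr, ⟨r.1 ∩ {m' | m + m' ∈ r.1}, inter_mem r.2 hm⟩,
      Set.inter_subset_left, fun _ hm' => hm'.2⟩
  choose term hterm hmem next hnext hadd using step
  let r : ℕ → {r // r ∈ U} := fun n => n.rec ⟨s, hs⟩ next
  exact ⟨fun n => term n (r n), fun n => hterm n (r n),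
    hindmanFS_drop_subset (s := fun n => (r n).1)
      (antitone_nat_of_succ_le fun n => hnext n (r n)) (fun n => hmem n (r n))
      (fun n => hadd n (r n)) 0⟩

end IdempotentUltrafilters

section Series

variable {E : Type*} [AddCommGroup E]

theorem tendsto_zero_of_tendsto_sum_range [TopologicalSpace E] [ContinuousSub E]
    {x : ℕ → E} {L : E} (h : Tendsto (fun N => ∑ n ∈ Finset.range N, x n) atTop (𝓝 L)) :
    Tendsto x atTop (𝓝 0) := by
  simpa [Finset.sum_range_succ] using ((tendsto_add_atTop_iff_nat 1).2 h).sub h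

theorem cauchySeq_sum_range_of_hindmanFS_drop_subset [UniformSpace E] [IsUniformAddGroup E]
    {x : Stream' E} (h : ∀ W ∈ 𝓝 (0 : E), ∃ n, Hindman.FS (x.drop n) ⊆ W) :
    CauchySeq fun N => ∑ n ∈ Finset.range N, x.get n := by
  refine (𝓝 (0 : E)).basis_sets.uniformity_of_nhds_zero_swapped.cauchySeq_iff'.2 fun W hW => ?_
  obtain ⟨N, hN⟩ := h W hW
  refine ⟨N, fun n hn => ?_⟩
  obtain ⟨k, rfl⟩ := Nat.exists_eq_add_of_le hn
  obtain rfl | hk := k.eq_zero_or_pos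
  · simpa using mem_of_mem_nhds hW
  · have hsum := Hindman.FS.finsetSum (x.drop N) (Finset.range k)
      (Finset.nonempty_range_iff.2 hk.ne')
    simpa [Finset.sum_range_add, Stream'.get_drop] using hN hsum

end Series

section IPNearZero

variable {E : Type*}

/-- IP sets near `0` in a subsemigroup of an arbitrary commutative topological monoid: `A` contains
all finite sums of a sequence in `S` whose series converges. It extends `IPNearZero`, with finite
sums expressed through `Hindman.FS`. -/
def IsIPNearZero [AddCommMonoid E] [TopologicalSpace E] (S : AddSubsemigroup E) (A : Set E) :
    Prop :=
  ∃ x : Stream' E, (∀ n, x.get n ∈ S) ∧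
    (∃ L, Tendsto (fun N => ∑ n ∈ Finset.range N, x.get n) atTop (𝓝 L)) ∧ Hindman.FS x ⊆ A

/-- IP* sets near `0` in a subsemigroup of an arbitrary commutative topological monoid, extending
`IPStarNearZero`. -/
def IsIPStarNearZero [AddCommMonoid E] [TopologicalSpace E] (S : AddSubsemigroup E)
    (D : Set E) : Prop :=
  ∀ C ⊆ (S : Set E), IsIPNearZero S C → IsIPNearZero S (C ∩ D)

theorem IsIPNearZero.nonempty [AddCommMonoid E] [TopologicalSpace E] {S : AddSubsemigroup E}
    {A : Set E} (hA : IsIPNearZero S A) : A.Nonempty :=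
  let ⟨x, _, _, hx⟩ := hA
  ⟨x.head, hx (Hindman.FS.head x)⟩

variable [AddCommGroup E] {S : AddSubsemigroup E} {A : Set E}

theorem IsIPNearZero.exists_idempotent [TopologicalSpace E] [IsTopologicalAddGroup E]
    [FirstCountableTopology E] (hA : IsIPNearZero S A) :
    ∃ p : Ultrafilter S, Tendsto ((↑) : S → E) p (𝓝 0) ∧ p + p = p ∧
      ∀ᶠ s : S in p, (s : E) ∈ A := by
  obtain ⟨x, hxS, ⟨L, hL⟩, hxA⟩ := hA
  obtain ⟨V, hV, hVadd⟩ := IsTopologicalAddGroup.exists_antitone_basis_nhds_zero E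
  obtain ⟨φ, hφ, hφV⟩ := extraction_forall_of_eventually fun n =>
    (tendsto_zero_of_tendsto_sum_range hL).eventually_mem (hV.mem (n + 1))
  let a : Stream' S := fun n => ⟨x.get (φ n), hxS (φ n)⟩
  have hsum {n : ℕ} {s : S} (hs : s ∈ Hindman.FS (a.drop n)) :
      (s : E) ∈ Hindman.FS ((a.map (↑)).drop n) := by
    rw [Stream'.drop_map]
    exact (hindmanFS_map (AddMemClass.subtype S) _).ge ⟨s, hs, rfl⟩
  obtain ⟨p, hp, hpa⟩ := exists_idempotent_ultrafilter_forall_hindmanFS_drop_mem a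
  refine ⟨p, hV.tendsto_right_iff.2 fun n _ => ?_, hp, ?_⟩
  · filter_upwards [hpa n] with s hs
    exact hindmanFS_drop_subset_of_add_subset hV.antitone hVadd hφV n (hsum hs)
  · filter_upwards [hpa 0] with s hs
    exact hxA (hindmanFS_subsequence_subset x hφ.injective (hsum hs))

theorem isIPNearZero_of_idempotent [UniformSpace E] [IsUniformAddGroup E] [CompleteSpace E]
    [FirstCountableTopology E] {p : Ultrafilter S} (hp0 : Tendsto ((↑) : S → E) p (𝓝 0))
    (hp : p + p = p) (hA : ∀ᶠ s : S in p, (s : E) ∈ A) : IsIPNearZero S A := by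
  obtain ⟨V, hV, hVadd⟩ := IsTopologicalAddGroup.exists_antitone_basis_nhds_zero E
  obtain ⟨a, haV, haA⟩ := exists_stream_mem_hindmanFS_subset hp hA
    fun n => hp0 (hV.mem (n + 1))
  refine ⟨a.map ((↑) : S → E), fun n => (a.get n).2, cauchySeq_tendsto_of_complete ?_, ?_⟩
  · refine cauchySeq_sum_range_of_hindmanFS_drop_subset fun W hW => ?_
    obtain ⟨n, hn⟩ := hV.mem_iff.1 hW
    exact ⟨n, (hindmanFS_drop_subset_of_add_subset hV.antitone hVadd haV n).trans hn⟩
  · exact (hindmanFS_map (AddMemClass.subtype S) a).trans_subset (Set.image_subset_iff.2 haA)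

theorem ipstar_near_zero_iff_every_idempotent_general [UniformSpace E] [IsUniformAddGroup E]
    [CompleteSpace E] [FirstCountableTopology E] (S : AddSubsemigroup E) (D : Set E) :
    IsIPStarNearZero S D ↔
      ∀ p : Ultrafilter S, Tendsto ((↑) : S → E) p (𝓝 0) → p + p = p →
        ∀ᶠ s : S in p, (s : E) ∈ D := by
  refine ⟨fun hD p hp0 hp => ?_, fun hD C _ hC => ?_⟩
  · by_contra hpD
    have hcompl : ∀ᶠ s : S in p, (s : E) ∈ (S : Set E) \ D :=
      (Ultrafilter.eventually_not.2 hpD).mono fun s hs => ⟨s.2, hs⟩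
    obtain ⟨s, hs, hsD⟩ :=
      (hD _ Set.sdiff_subset (isIPNearZero_of_idempotent hp0 hp hcompl)).nonempty
    exact hs.2 hsD
  · obtain ⟨p, hp0, hp, hpC⟩ := hC.exists_idempotent
    exact isIPNearZero_of_idempotent hp0 hp (hpC.and (hD p hp0 hp))

end IPNearZero

section Quaternion

theorem FS_eq_hindmanFS (x : ℕ → Quaternion ℝ) : FS x = Hindman.FS x :=
  Set.ext fun _ => mem_hindmanFS_iff_exists_sum.symm

theorem mem_zeroPlus_iff_tendsto (S : Set (Quaternion ℝ)) (p : Ultrafilter S) :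
    p ∈ zeroPlus S ↔ Tendsto ((↑) : S → Quaternion ℝ) p (𝓝 0) := by
  simp only [Metric.tendsto_nhds, dist_zero_right]
  exact Iff.rfl

variable (S : AddSubsemigroup (Quaternion ℝ))

theorem ipNearZero_iff_isIPNearZero (A : Set (Quaternion ℝ)) :
    IPNearZero S A ↔ IsIPNearZero S A := by
  simp only [IPNearZero, FS_eq_hindmanFS]
  exact Iff.rfl

theorem ipStarNearZero_iff_isIPStarNearZero (D : Set (Quaternion ℝ)) :
    IPStarNearZero S D ↔ IsIPStarNearZero S D := by
  simp only [IPStarNearZero, IsIPStarNearZero, ipNearZero_iff_isIPNearZero]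

theorem uaddS_eq_add (p q : Ultrafilter S) :
    uaddS S (fun _ ha _ hb => S.add_mem ha hb) p q = p + q :=
  rfl

end Quaternion

/-- For a dense subsemigroup `S` of `(ℍ, +)`, a subset `D` of `S` is an
IP* set near 0 if and only if `D` belongs to every idempotent ultrafilter of `0⁺(S)`. -/
theorem ipstar_near_zero_iff_every_idempotent (S : Set (Quaternion ℝ))
    (hSdense : Dense S)
    (hSadd : ∀ a ∈ S, ∀ b ∈ S, a + b ∈ S)
    (D : Set (Quaternion ℝ)) (hDS : D ⊆ S) :
    IPStarNearZero S D ↔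
      ∀ p : Ultrafilter S, p ∈ zeroPlus S → uaddS S hSadd p p = p →
        {x : S | (x : Quaternion ℝ) ∈ D} ∈ p := by
  obtain ⟨T, rfl⟩ : ∃ T : AddSubsemigroup (Quaternion ℝ), (T : Set (Quaternion ℝ)) = S :=
    ⟨⟨S, fun ha hb => hSadd _ ha _ hb⟩, rfl⟩
  simp only [ipStarNearZero_iff_isIPStarNearZero, mem_zeroPlus_iff_tendsto, uaddS_eq_add]
  exact ipstar_near_zero_iff_every_idempotent_general T D
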